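/- Let X be a nonempty finite set, let p̂ ∈ Δ_X satisfy p̂(x) > 0 for all x, let V : X → ℝ, and let ε ≥ 0. Define r(η) = ε − D(p_η‖p̂) for η > 0, where p_η is the exponentially tilted distribution. Let 0 < η_min and σ_min > 0, and suppose η̂, η* ≥ η_min are such that Var_{p_ξ}(V) ≥ σ_min² for every ξ in the closed interval between η̂ and η*, and r(η*) = 0. Then |η̂ − η*| ≤ |ε − D(p_{η̂}‖p̂)| / (η_min·σ_min²). -/

import Mathlib

/-- Partition function `Z(η) = Σ_x p̂(x) e^{−ηV(x)}`. -/
noncomputable def partitionZ {X : Type*} [Fintype X] (phat V : X → ℝ) (η : ℝ) : ℝ :=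
  ∑ x, phat x * Real.exp (-η * V x)

/-- Exponentially tilted distribution `p_η(x) = p̂(x) e^{−ηV(x)} / Z(η)`. -/
noncomputable def tilted {X : Type*} [Fintype X] (phat V : X → ℝ) (η : ℝ) : X → ℝ :=
  fun x => phat x * Real.exp (-η * V x) / partitionZ phat V η

/-- KL divergence `D(p‖q) = Σ_x p(x) log(p(x)/q(x))`. -/
noncomputable def klDiv {X : Type*} [Fintype X] (p q : X → ℝ) : ℝ :=
  ∑ x, p x * Real.log (p x / q x)

/-- Variance of `f` under `p`. -/
noncomputable def varUnder {X : Type*} [Fintype X] (p f : X → ℝ) : ℝ :=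
  (∑ x, p x * f x ^ 2) - (∑ x, p x * f x) ^ 2

/-!
Differentiating the tilted weights gives `dp_η(x)/dη = p_η(x) (E_η V - V(x))`, hence
`d(E_η V)/dη = -Var_η V` and `d(log Z)/dη = -E_η V`. Since `D(p_η‖p̂) = -η E_η V - log Z(η)`, the
mean terms cancel and `dD/dη = η Var_η V`. On the interval between `η̂` and `η*` this derivative is
at least `η_min σ_min²`, so by the mean value theorem `D` separates points at this rate.
-/

/-- The mean `E_p f`; it puts `D(p_η‖p̂)` and the variance in closed form. `p` is any weight vector,
not assumed normalised. -/
noncomputable def meanUnder {X : Type*} [Fintype X] (p f : X → ℝ) : ℝ :=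
  ∑ x, p x * f x

theorem mul_abs_sub_le_abs_image_sub_of_le_hasDerivAt {f f' : ℝ → ℝ} {a b C : ℝ}
    (hf : ∀ t ∈ Set.uIcc a b, HasDerivAt f (f' t) t) (hC : ∀ t ∈ Set.uIcc a b, C ≤ f' t) :
    C * |a - b| ≤ |f a - f b| := by
  wlog hab : a ≤ b generalizing a b
  · rw [abs_sub_comm a, abs_sub_comm (f a)]
    rw [Set.uIcc_comm] at hf hC
    exact this hf hC (le_of_not_ge hab)
  rw [Set.uIcc_of_le hab] at hf hC
  have hgrowth : C * (b - a) ≤ f b - f a := by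
    refine (convex_Icc a b).mul_sub_le_image_sub_of_le_deriv
      (fun t ht ↦ (hf t ht).continuousAt.continuousWithinAt)
      (fun t ht ↦ (hf t (interior_subset ht)).differentiableAt.differentiableWithinAt)
      (fun t ht ↦ ?_) a (Set.left_mem_Icc.2 hab) b (Set.right_mem_Icc.2 hab) hab
    rw [(hf t (interior_subset ht)).deriv]
    exact hC t (interior_subset ht)
  rw [abs_sub_comm a, abs_sub_comm (f a), abs_of_nonneg (sub_nonneg.2 hab)]
  exact hgrowth.trans (le_abs_self _)

section ExponentialTilting

variable {X : Type*} [Fintype X] {phat V : X → ℝ} {η : ℝ}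

theorem partitionZ_pos (hnonneg : 0 ≤ phat) (hne : phat ≠ 0) : 0 < partitionZ phat V η := by
  obtain ⟨x, hx⟩ := Function.ne_iff.1 hne
  exact Finset.sum_pos' (fun y _ ↦ mul_nonneg (hnonneg y) (Real.exp_nonneg _))
    ⟨x, Finset.mem_univ x, mul_pos ((hnonneg x).lt_of_ne' hx) (Real.exp_pos _)⟩

theorem sum_tilted (hZ : partitionZ phat V η ≠ 0) : ∑ x, tilted phat V η x = 1 := by
  simp only [tilted, ← Finset.sum_div]
  exact div_self hZ

theorem mul_meanUnder_tilted (hZ : partitionZ phat V η ≠ 0) (f : X → ℝ) :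
    partitionZ phat V η * meanUnder (tilted phat V η) f =
      ∑ x, phat x * Real.exp (-η * V x) * f x := by
  rw [meanUnder, Finset.mul_sum]
  refine Finset.sum_congr rfl fun x _ ↦ ?_
  rw [tilted]
  field_simp

theorem tilted_mul_log_div (hZ : partitionZ phat V η ≠ 0) (x : X) :
    tilted phat V η x * Real.log (tilted phat V η x / phat x) =
      tilted phat V η x * (-η * V x - Real.log (partitionZ phat V η)) := by
  rcases eq_or_ne (phat x) 0 with hx | hx
  · simp only [tilted, hx, zero_mul, zero_div]
  · have hratio : tilted phat V η x / phat x = Real.exp (-η * V x) / partitionZ phat V η := by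
      rw [tilted]
      field_simp
    rw [hratio, Real.log_div (Real.exp_ne_zero _) hZ, Real.log_exp]

theorem klDiv_tilted (hZ : partitionZ phat V η ≠ 0) :
    klDiv (tilted phat V η) phat =
      -η * meanUnder (tilted phat V η) V - Real.log (partitionZ phat V η) := by
  calc klDiv (tilted phat V η) phat
      = ∑ x, tilted phat V η x * (-η * V x - Real.log (partitionZ phat V η)) :=
        Finset.sum_congr rfl fun x _ ↦ tilted_mul_log_div hZ x
    _ = -η * meanUnder (tilted phat V η) V
          - (∑ x, tilted phat V η x) * Real.log (partitionZ phat V η) := by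
        rw [meanUnder, Finset.mul_sum, Finset.sum_mul, ← Finset.sum_sub_distrib]
        exact Finset.sum_congr rfl fun x _ ↦ by ring
    _ = -η * meanUnder (tilted phat V η) V - Real.log (partitionZ phat V η) := by
        rw [sum_tilted hZ, one_mul]

theorem hasDerivAt_mul_exp_neg_mul (c v t : ℝ) :
    HasDerivAt (fun s ↦ c * Real.exp (-s * v)) (-(c * Real.exp (-t * v) * v)) t := by
  refine (((hasDerivAt_neg t).mul_const v).exp.const_mul c).congr_deriv ?_
  ring

theorem hasDerivAt_partitionZ (hZ : partitionZ phat V η ≠ 0) :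
    HasDerivAt (partitionZ phat V)
      (-(partitionZ phat V η * meanUnder (tilted phat V η) V)) η := by
  rw [mul_meanUnder_tilted hZ, ← Finset.sum_neg_distrib]
  exact HasDerivAt.fun_sum fun x _ ↦ hasDerivAt_mul_exp_neg_mul (phat x) (V x) η

theorem hasDerivAt_log_partitionZ (hZ : partitionZ phat V η ≠ 0) :
    HasDerivAt (fun t ↦ Real.log (partitionZ phat V t)) (-meanUnder (tilted phat V η) V) η := by
  refine ((hasDerivAt_partitionZ hZ).log hZ).congr_deriv ?_
  field_simp

theorem hasDerivAt_tilted (hZ : partitionZ phat V η ≠ 0) (x : X) :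
    HasDerivAt (fun t ↦ tilted phat V t x)
      (tilted phat V η x * (meanUnder (tilted phat V η) V - V x)) η := by
  refine ((hasDerivAt_mul_exp_neg_mul (phat x) (V x) η).fun_div
    (hasDerivAt_partitionZ hZ) hZ).congr_deriv ?_
  rw [show tilted phat V η x = phat x * Real.exp (-η * V x) / partitionZ phat V η from rfl]
  field_simp
  ring

theorem hasDerivAt_meanUnder_tilted (hZ : partitionZ phat V η ≠ 0) (f : X → ℝ) :
    HasDerivAt (fun t ↦ meanUnder (tilted phat V t) f)
      (meanUnder (tilted phat V η) V * meanUnder (tilted phat V η) f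
        - meanUnder (tilted phat V η) (V * f)) η := by
  have hsum : HasDerivAt (fun t ↦ meanUnder (tilted phat V t) f)
      (∑ x, tilted phat V η x * (meanUnder (tilted phat V η) V - V x) * f x) η :=
    HasDerivAt.fun_sum fun x _ ↦ (hasDerivAt_tilted hZ x).mul_const (f x)
  refine hsum.congr_deriv ?_
  generalize meanUnder (tilted phat V η) V = μ
  simp only [meanUnder, Pi.mul_apply, Finset.mul_sum, ← Finset.sum_sub_distrib]
  exact Finset.sum_congr rfl fun x _ ↦ by ring

theorem varUnder_eq_meanUnder_sub (p f : X → ℝ) :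
    varUnder p f = meanUnder p (f * f) - meanUnder p f * meanUnder p f := by
  simp only [varUnder, meanUnder, Pi.mul_apply, sq]

theorem hasDerivAt_meanUnder_tilted_self (hZ : partitionZ phat V η ≠ 0) :
    HasDerivAt (fun t ↦ meanUnder (tilted phat V t) V) (-varUnder (tilted phat V η) V) η := by
  rw [varUnder_eq_meanUnder_sub, neg_sub]
  exact hasDerivAt_meanUnder_tilted hZ V

theorem hasDerivAt_klDiv_tilted (hZ : partitionZ phat V η ≠ 0) :
    HasDerivAt (fun t ↦ klDiv (tilted phat V t) phat) (η * varUnder (tilted phat V η) V) η := by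
  have hformula : (fun t ↦ klDiv (tilted phat V t) phat) =ᶠ[nhds η] fun t ↦
      -t * meanUnder (tilted phat V t) V - Real.log (partitionZ phat V t) :=
    ((hasDerivAt_partitionZ hZ).continuousAt.eventually_ne hZ).mono fun _ ↦ klDiv_tilted
  have hderiv := ((hasDerivAt_neg η).fun_mul (hasDerivAt_meanUnder_tilted_self hZ)).fun_sub
    (hasDerivAt_log_partitionZ hZ)
  refine (hderiv.congr_of_eventuallyEq hformula).congr_deriv ?_
  ring

end ExponentialTilting

theorem kl_residual_bound_general {X : Type*} [Fintype X] {phat V : X → ℝ}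
    (hnonneg : 0 ≤ phat) (hne : phat ≠ 0) {ηmin v a b : ℝ} (hηmin : 0 < ηmin) (hv : 0 < v)
    (ha : ηmin ≤ a) (hb : ηmin ≤ b)
    (hvar : ∀ ξ ∈ Set.uIcc a b, v ≤ varUnder (tilted phat V ξ) V) :
    |a - b| ≤ |klDiv (tilted phat V a) phat - klDiv (tilted phat V b) phat| / (ηmin * v) := by
  have hrate : ∀ ξ ∈ Set.uIcc a b, ηmin * v ≤ ξ * varUnder (tilted phat V ξ) V := fun ξ hξ ↦
    have hηξ : ηmin ≤ ξ := (le_inf ha hb).trans hξ.1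
    mul_le_mul hηξ (hvar ξ hξ) hv.le (hηmin.le.trans hηξ)
  rw [le_div_iff₀' (mul_pos hηmin hv)]
  exact mul_abs_sub_le_abs_image_sub_of_le_hasDerivAt
    (fun ξ _ ↦ hasDerivAt_klDiv_tilted (partitionZ_pos hnonneg hne).ne') hrate

/-- KL residual controls the temperature error. If
`r(η) = ε − D(p_η‖p̂)`, `η̂, η* ≥ η_min > 0`, `Var_{p_ξ}(V) ≥ σ_min²` for all `ξ`
in the closed interval between `η̂` and `η*`, and `r(η*) = 0`, then
`|η̂ − η*| ≤ |ε − D(p_{η̂}‖p̂)| / (η_min σ_min²)`. -/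
theorem kl_residual_bound {X : Type*} [Fintype X] [Nonempty X]
    (phat : X → ℝ) (hpos : ∀ x, 0 < phat x) (hsum : ∑ x, phat x = 1)
    (V : X → ℝ) (ε : ℝ) (hε : 0 ≤ ε)
    (ηmin σmin : ℝ) (hηmin : 0 < ηmin) (hσmin : 0 < σmin)
    (ηhat ηstar : ℝ) (hηhat : ηmin ≤ ηhat) (hηstar : ηmin ≤ ηstar)
    (hvar : ∀ ξ ∈ Set.uIcc ηhat ηstar, σmin ^ 2 ≤ varUnder (tilted phat V ξ) V)
    (hroot : ε - klDiv (tilted phat V ηstar) phat = 0) :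
    |ηhat - ηstar| ≤ |ε - klDiv (tilted phat V ηhat) phat| / (ηmin * σmin ^ 2) := by
  rw [sub_eq_zero.1 hroot, abs_sub_comm (klDiv _ _)]
  exact kl_residual_bound_general (fun x ↦ (hpos x).le) (fun h ↦ by simp [h] at hsum)
    hηmin (pow_pos hσmin 2) hηhat hηstar hvar
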